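/- Let n ≥ 6. Consider the position of n-Sim consisting of a drawn K_5 on 5 of the n vertices together with one additional green edge joining a vertex of the drawn K_5 to a vertex outside it, all other edges of K_n uncolored, with PII to move. Then PII has a winning strategy from this position. -/

import Mathlib

/-- The set of valid (non-loop) edges of the complete graph on `Fin n`. -/
def simEdges (n : ℕ) : Finset (Sym2 (Fin n)) :=
  Finset.univ.filter (fun e => ¬ e.IsDiag)

/-- An edge set `S` contains a triangle: three edges of `S` spanned by three
distinct vertices. -/
def HasTriangle {n : ℕ} (S : Finset (Sym2 (Fin n))) : Prop :=
  ∃ a b c : Fin n, a ≠ b ∧ a ≠ c ∧ b ≠ c ∧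
    s(a, b) ∈ S ∧ s(a, c) ∈ S ∧ s(b, c) ∈ S

/-- The uncolored edges, given the two players' edge sets. -/
def avail {n : ℕ} (A B : Finset (Sym2 (Fin n))) : Finset (Sym2 (Fin n)) :=
  simEdges n \ (A ∪ B)

/-- `MoverWins own opp` : in the game of n-Sim (players alternately claim an
uncolored edge of `K n`, and whoever first has a triangle in their own edges
loses), the player about to move, whose already-claimed edges are `own` while
the opponent's are `opp`, has a winning strategy.

The mover wins iff they can claim some uncolored edge `e` not creating a
triangle in their own color, so that afterwards the opponent still has to move
(there is an uncolored edge left; otherwise the game is a draw), and every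
reply `f` of the opponent either completes a triangle in the opponent's color
(so the opponent loses) or leads to a position where the original mover again
wins. -/
inductive MoverWins {n : ℕ} : Finset (Sym2 (Fin n)) → Finset (Sym2 (Fin n)) → Prop where
  | step (own opp : Finset (Sym2 (Fin n))) (e : Sym2 (Fin n))
      (he : e ∈ avail own opp)
      (hsafe : ¬ HasTriangle (insert e own))
      (hne : (avail opp (insert e own)).Nonempty)
      (hreplies : ∀ f ∈ avail opp (insert e own), ¬ HasTriangle (insert f opp) →
        MoverWins (insert e own) (insert f opp)) :
      MoverWins own opp

/-- `NonMoverWins own opp` : the player NOT about to move (the one whose edges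
are `opp`) has a winning strategy: there is at least one uncolored edge (the
mover must move), and every non-losing move of the mover leads to a position
won by the (new) mover, i.e. by the original non-mover. -/
def NonMoverWins {n : ℕ} (own opp : Finset (Sym2 (Fin n))) : Prop :=
  (avail own opp).Nonempty ∧
    ∀ e ∈ avail own opp, ¬ HasTriangle (insert e own) →
      MoverWins opp (insert e own)

/-- The green edges of a drawn `K₅` on the five distinct vertices
`v 0, …, v 4`: the pentagon `v i — v (i+1)`. -/
def greenK5 {n : ℕ} (v : Fin 5 → Fin n) : Finset (Sym2 (Fin n)) :=
  Finset.univ.image (fun i : Fin 5 => s(v i, v (i + 1)))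

/-- The red edges of a drawn `K₅` on the five distinct vertices
`v 0, …, v 4`: the complementary pentagram `v i — v (i+2)`. -/
def redK5 {n : ℕ} (v : Fin 5 → Fin n) : Finset (Sym2 (Fin n)) :=
  Finset.univ.image (fun i : Fin 5 => s(v i, v (i + 2)))

theorem HasTriangle.mono' {n : ℕ} {S T : Finset (Sym2 (Fin n))} (h : S ⊆ T)
    (hS : HasTriangle S) : HasTriangle T := by
  obtain ⟨a, b, c, h1, h2, h3, h4, h5, h6⟩ := hS
  exact ⟨a, b, c, h1, h2, h3, h h4, h h5, h h6⟩

theorem mem_avail {n : ℕ} {A B : Finset (Sym2 (Fin n))} {e : Sym2 (Fin n)} :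
    e ∈ avail A B ↔ ¬ e.IsDiag ∧ e ∉ A ∧ e ∉ B := by
  simp [avail, simEdges]

/-- An extra own edge which the opponent could never safely claim can be dropped. -/
theorem moverWins_drop {n : ℕ} (e : Sym2 (Fin n)) {O opp : Finset (Sym2 (Fin n))}
    (h : MoverWins O opp) :
    ∀ own, O = insert e own → HasTriangle (insert e opp) → MoverWins own opp := by
  induction h with
  | step O opp f hf hsafe hne hrep ih =>
    rintro own rfl htri
    have hsub : insert f own ⊆ insert f (insert e own) :=
      Finset.insert_subset_insert _ (Finset.subset_insert _ _)
    refine MoverWins.step own opp f ?_ (fun h => hsafe (h.mono' hsub)) ?_ ?_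
    · rw [mem_avail] at hf ⊢
      exact ⟨hf.1, fun h => hf.2.1 (Finset.mem_insert_of_mem h), hf.2.2⟩
    · obtain ⟨g, hg⟩ := hne
      rw [mem_avail] at hg
      exact ⟨g, mem_avail.2 ⟨hg.1, hg.2.1, fun h => hg.2.2 (hsub h)⟩⟩
    · intro g hg hgs
      have hge : g ≠ e := by
        rintro rfl
        exact hgs htri
      rw [mem_avail] at hg
      refine ih g (mem_avail.2 ⟨hg.1, hg.2.1, ?_⟩) hgs (insert f own)
        (Finset.insert_comm _ _ _) (htri.mono' ?_)
      · simp only [Finset.mem_insert, not_or] at hg ⊢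
        exact ⟨hg.2.2.1, hge, hg.2.2.2⟩
      · exact Finset.insert_subset_insert _ (Finset.subset_insert _ _)

theorem three_nbrs {n : ℕ} {S T : Finset (Sym2 (Fin n))}
    (hST : ∀ a b : Fin n, a ≠ b → s(a, b) ∈ S ∨ s(a, b) ∈ T)
    (hS : ¬ HasTriangle S) (hT : ¬ HasTriangle T) {x a b c : Fin n}
    (xa : x ≠ a) (xb : x ≠ b) (xc : x ≠ c) (ab : a ≠ b) (ac : a ≠ c) (bc : b ≠ c)
    (h1 : s(x, a) ∈ S) (h2 : s(x, b) ∈ S) (h3 : s(x, c) ∈ S) : False := by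
  have k1 : s(a, b) ∉ S := fun h => hS ⟨x, a, b, xa, xb, ab, h1, h2, h⟩
  have k2 : s(a, c) ∉ S := fun h => hS ⟨x, a, c, xa, xc, ac, h1, h3, h⟩
  have k3 : s(b, c) ∉ S := fun h => hS ⟨x, b, c, xb, xc, bc, h2, h3, h⟩
  exact hT ⟨a, b, c, ab, ac, bc, (hST _ _ ab).resolve_left k1,
    (hST _ _ ac).resolve_left k2, (hST _ _ bc).resolve_left k3⟩

/-- No draws: `R(3,3) = 6`. -/
theorem avail_nonempty {n : ℕ} (u : Fin 6 → Fin n) (hu : Function.Injective u)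
    {S T : Finset (Sym2 (Fin n))}
    (hS : ¬ HasTriangle S) (hT : ¬ HasTriangle T) : (avail S T).Nonempty := by
  by_contra hne
  rw [Finset.not_nonempty_iff_eq_empty] at hne
  have hST : ∀ a b : Fin n, a ≠ b → s(a, b) ∈ S ∨ s(a, b) ∈ T := by
    intro a b hab
    by_contra hcon
    rw [not_or] at hcon
    have : s(a, b) ∈ avail S T := mem_avail.2 ⟨by simpa using hab, hcon⟩
    simp [hne] at this
  have hTS : ∀ a b : Fin n, a ≠ b → s(a, b) ∈ T ∨ s(a, b) ∈ S :=
    fun a b h => (hST a b h).symm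
  have hne' : ∀ a b : Fin 6, a ≠ b → u a ≠ u b := fun a b h => hu.ne h
  have KS : ∀ a b c : Fin 6, 0 ≠ a → 0 ≠ b → 0 ≠ c → a ≠ b → a ≠ c → b ≠ c →
      s(u 0, u a) ∈ S → s(u 0, u b) ∈ S → s(u 0, u c) ∈ S → False :=
    fun a b c h1 h2 h3 h4 h5 h6 => three_nbrs hST hS hT (hne' _ _ h1) (hne' _ _ h2)
      (hne' _ _ h3) (hne' _ _ h4) (hne' _ _ h5) (hne' _ _ h6)
  have KT : ∀ a b c : Fin 6, 0 ≠ a → 0 ≠ b → 0 ≠ c → a ≠ b → a ≠ c → b ≠ c →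
      s(u 0, u a) ∈ T → s(u 0, u b) ∈ T → s(u 0, u c) ∈ T → False :=
    fun a b c h1 h2 h3 h4 h5 h6 => three_nbrs hTS hT hS (hne' _ _ h1) (hne' _ _ h2)
      (hne' _ _ h3) (hne' _ _ h4) (hne' _ _ h5) (hne' _ _ h6)
  have e : ∀ a : Fin 6, 0 ≠ a → s(u 0, u a) ∈ S ∨ s(u 0, u a) ∈ T :=
    fun a h => hST _ _ (hne' _ _ h)
  have K (P : Fin 6 → Prop) (h : ∀ a b c : Fin 6, 0 ≠ a → 0 ≠ b → 0 ≠ c → a ≠ b → a ≠ c →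
      b ≠ c → P a → P b → P c → False) :
      ¬ (P 1 ∧ P 2 ∧ P 3) ∧ ¬ (P 1 ∧ P 2 ∧ P 4) ∧ ¬ (P 1 ∧ P 2 ∧ P 5) ∧ ¬ (P 1 ∧ P 3 ∧ P 4) ∧
      ¬ (P 1 ∧ P 3 ∧ P 5) ∧ ¬ (P 1 ∧ P 4 ∧ P 5) ∧ ¬ (P 2 ∧ P 3 ∧ P 4) ∧ ¬ (P 2 ∧ P 3 ∧ P 5) ∧
      ¬ (P 2 ∧ P 4 ∧ P 5) ∧ ¬ (P 3 ∧ P 4 ∧ P 5) := by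
    refine ⟨?_, ?_, ?_, ?_, ?_, ?_, ?_, ?_, ?_, ?_⟩ <;> rintro ⟨ha, hb, hc⟩ <;>
      exact h _ _ _ (by decide) (by decide) (by decide) (by decide) (by decide) (by decide)
        ha hb hc
  have k1 := K (fun a => s(u 0, u a) ∈ S) KS
  have k2 := K (fun a => s(u 0, u a) ∈ T) KT
  have e1 := e 1 (by decide)
  have e2 := e 2 (by decide)
  have e3 := e 3 (by decide)
  have e4 := e 4 (by decide)
  have e5 := e 5 (by decide)
  clear K KS KT e hTS hST hS hT hne hne'
  generalize (s(u 0, u 1) ∈ S) = p1 at *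
  generalize (s(u 0, u 2) ∈ S) = p2 at *
  generalize (s(u 0, u 3) ∈ S) = p3 at *
  generalize (s(u 0, u 4) ∈ S) = p4 at *
  generalize (s(u 0, u 5) ∈ S) = p5 at *
  grind

/-- Determinacy. -/
theorem determined {n : ℕ} (u : Fin 6 → Fin n) (hu : Function.Injective u) (k : ℕ) :
    ∀ A B : Finset (Sym2 (Fin n)), (avail A B).card = k → ¬ HasTriangle A → ¬ HasTriangle B →
      MoverWins A B ∨ NonMoverWins A B := by
  induction k using Nat.strong_induction_on with
  | _ k ih =>
    intro A B hk hA hB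
    by_cases hM : MoverWins A B
    · exact Or.inl hM
    refine Or.inr ⟨avail_nonempty u hu hA hB, fun e he hs => ?_⟩
    have hlt : (avail B (insert e A)).card < k := by
      rw [← hk]
      apply Finset.card_lt_card
      rw [Finset.ssubset_iff_of_subset]
      · exact ⟨e, he, by simp [mem_avail]⟩
      · intro g
        simp only [mem_avail, Finset.mem_insert, not_or]
        tauto
    rcases ih _ hlt B (insert e A) rfl hB hs with h | h
    · exact h
    · exact absurd (MoverWins.step A B e he hs h.1 h.2) hM

/-- The image of an edge set under a permutation of the vertices. -/
def relabel {n : ℕ} (p : Equiv.Perm (Fin n)) (S : Finset (Sym2 (Fin n))) :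
    Finset (Sym2 (Fin n)) := S.image (Sym2.map p)

theorem mem_relabel {n : ℕ} (p : Equiv.Perm (Fin n)) (S : Finset (Sym2 (Fin n)))
    (e : Sym2 (Fin n)) : e ∈ relabel p S ↔ Sym2.map p.symm e ∈ S := by
  unfold relabel
  rw [Finset.mem_image]
  constructor
  · rintro ⟨a, ha, rfl⟩
    simpa [Sym2.map_map] using ha
  · intro h
    exact ⟨_, h, by simp [Sym2.map_map]⟩

theorem map_mem_relabel {n : ℕ} (p : Equiv.Perm (Fin n)) (S : Finset (Sym2 (Fin n)))
    (e : Sym2 (Fin n)) : Sym2.map p e ∈ relabel p S ↔ e ∈ S := by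
  rw [mem_relabel]
  simp [Sym2.map_map]

theorem relabel_insert {n : ℕ} (p : Equiv.Perm (Fin n)) (S : Finset (Sym2 (Fin n)))
    (e : Sym2 (Fin n)) : relabel p (insert e S) = insert (Sym2.map p e) (relabel p S) := by
  simp [relabel, Finset.image_insert]

theorem isDiag_map_perm {n : ℕ} (p : Equiv.Perm (Fin n)) (e : Sym2 (Fin n)) :
    (Sym2.map p e).IsDiag ↔ e.IsDiag := by
  induction e with
  | _ a b => simp

theorem map_mem_avail {n : ℕ} (p : Equiv.Perm (Fin n)) (A B : Finset (Sym2 (Fin n)))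
    (e : Sym2 (Fin n)) : Sym2.map p e ∈ avail (relabel p A) (relabel p B) ↔ e ∈ avail A B := by
  simp only [mem_avail, map_mem_relabel, isDiag_map_perm]

theorem hasTriangle_relabel {n : ℕ} (p : Equiv.Perm (Fin n)) {S : Finset (Sym2 (Fin n))}
    : HasTriangle (relabel p S) ↔ HasTriangle S := by
  constructor
  · rintro ⟨a, b, c, h1, h2, h3, h4, h5, h6⟩
    rw [mem_relabel] at h4 h5 h6
    exact ⟨p.symm a, p.symm b, p.symm c, by simpa, by simpa, by simpa, h4, h5, h6⟩
  · rintro ⟨a, b, c, h1, h2, h3, h4, h5, h6⟩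
    exact ⟨p a, p b, p c, by simpa, by simpa, by simpa,
      (map_mem_relabel p S s(a, b)).2 h4, (map_mem_relabel p S s(a, c)).2 h5,
      (map_mem_relabel p S s(b, c)).2 h6⟩

theorem exists_map_eq {n : ℕ} (p : Equiv.Perm (Fin n)) (f : Sym2 (Fin n)) :
    ∃ g, Sym2.map p g = f := ⟨Sym2.map p.symm f, by simp [Sym2.map_map]⟩

theorem moverWins_relabel {n : ℕ} (p : Equiv.Perm (Fin n)) {A B : Finset (Sym2 (Fin n))}
    (h : MoverWins A B) : MoverWins (relabel p A) (relabel p B) := by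
  induction h with
  | step A B e he hsafe hne hrep ih =>
    refine MoverWins.step _ _ (Sym2.map p e) ((map_mem_avail p A B e).2 he) ?_ ?_ ?_
    · rwa [← relabel_insert, hasTriangle_relabel]
    · obtain ⟨g, hg⟩ := hne
      refine ⟨Sym2.map p g, ?_⟩
      rwa [← relabel_insert, map_mem_avail]
    · intro f hf hfs
      obtain ⟨g, rfl⟩ := exists_map_eq p f
      rw [← relabel_insert, map_mem_avail] at hf
      rw [← relabel_insert, hasTriangle_relabel] at hfs
      rw [← relabel_insert, ← relabel_insert]
      exact ih g hf hfs

theorem nonMoverWins_relabel {n : ℕ} (p : Equiv.Perm (Fin n)) {A B : Finset (Sym2 (Fin n))}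
    (h : NonMoverWins A B) : NonMoverWins (relabel p A) (relabel p B) := by
  obtain ⟨⟨g, hg⟩, h2⟩ := h
  refine ⟨⟨Sym2.map p g, (map_mem_avail p A B g).2 hg⟩, fun f hf hfs => ?_⟩
  obtain ⟨e, rfl⟩ := exists_map_eq p f
  rw [map_mem_avail] at hf
  rw [← relabel_insert, hasTriangle_relabel] at hfs
  rw [← relabel_insert]
  exact moverWins_relabel p (h2 e hf hfs)

/-- A permutation of `Fin 5` exchanging pentagon and pentagram. -/
def swapPerm (i : Fin 5) : Equiv.Perm (Fin 5) where
  toFun j := 3 * j + 3 * i + 2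
  invFun j := 2 * (j - 3 * i - 2)
  left_inv := by revert i; decide
  right_inv := by revert i; decide

/-- Model on `Fin 6` of a `K₅` circulant together with an edge to the sixth vertex. -/
def model (d i : Fin 5) : Finset (Sym2 (Fin 6)) :=
  insert s(i.castSucc, Fin.last 5)
    (Finset.univ.image (fun j : Fin 5 => s(j.castSucc, (j + d).castSucc)))

theorem model_free (d : Fin 5) (hd : d = 1 ∨ d = 2) (i : Fin 5) : ¬ HasTriangle (model d i) := by
  unfold HasTriangle
  rcases hd with rfl | rfl <;> revert i <;> decide

theorem hasTriangle_of_image {n : ℕ} (u : Fin 6 → Fin n) (hu : Function.Injective u)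
    (S : Finset (Sym2 (Fin 6))) (h : HasTriangle (S.image (Sym2.map u))) : HasTriangle S := by
  obtain ⟨a, b, c, h1, h2, h3, h4, h5, h6⟩ := h
  have key : ∀ x y, s(x, y) ∈ S.image (Sym2.map u) → ∃ x' y', u x' = x ∧ u y' = y := by
    intro x y h
    obtain ⟨e, he, h⟩ := Finset.mem_image.1 h
    induction e with
    | _ p q =>
      simp only [Sym2.map_mk, Sym2.eq_iff] at h
      rcases h with ⟨h, h'⟩ | ⟨h, h'⟩
      · exact ⟨p, q, h, h'⟩
      · exact ⟨q, p, h', h⟩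
  obtain ⟨a, b, rfl, rfl⟩ := key _ _ h4
  obtain ⟨-, c, -, rfl⟩ := key _ _ h5
  have m : ∀ x y, s(u x, u y) ∈ S.image (Sym2.map u) → s(x, y) ∈ S := by
    intro x y h
    obtain ⟨e, he, h⟩ := Finset.mem_image.1 h
    have : e = s(x, y) := Sym2.map.injective hu (by simpa using h)
    rwa [← this]
  exact ⟨a, b, c, fun h => h1 (by rw [h]), fun h => h2 (by rw [h]), fun h => h3 (by rw [h]),
    m _ _ h4, m _ _ h5, m _ _ h6⟩

theorem drawn_K5_plus_outside_green_edge_secondPlayerWin (n : ℕ) (hn : 6 ≤ n)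
    (v : Fin 5 → Fin n) (hv : Function.Injective v)
    (w : Fin n) (hw : ∀ i, w ≠ v i) (i : Fin 5) :
    MoverWins (redK5 v) (insert s(v i, w) (greenK5 v)) := by
  let u : Fin 6 → Fin n := Fin.snoc (α := fun _ => Fin n) v w
  have uv : ∀ j : Fin 5, u j.castSucc = v j := fun j => Fin.snoc_castSucc (α := fun _ => Fin n) ..
  have uw : u (Fin.last 5) = w := Fin.snoc_last (α := fun _ => Fin n) ..
  have hu : Function.Injective u := by
    intro a b
    refine Fin.lastCases ?_ (fun a => ?_) a <;> refine Fin.lastCases ?_ (fun b => ?_) b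
    · simp
    · rw [uv, uw]; intro h; exact absurd h (hw _)
    · rw [uv, uw]; intro h; exact absurd h.symm (hw _)
    · rw [uv, uv]; intro h; rw [hv h]
  have hG : ∀ j, ¬ HasTriangle (insert s(v j, w) (greenK5 v)) := by
    intro j h
    refine model_free 1 (Or.inl rfl) j (hasTriangle_of_image u hu _ ?_)
    convert h using 1
    simp only [model, Finset.image_insert, Finset.image_image, Sym2.map_mk, uv, uw, greenK5]
    congr 1
  have hR : ∀ j, ¬ HasTriangle (insert s(v j, w) (redK5 v)) := by
    intro j h
    refine model_free 2 (Or.inr rfl) j (hasTriangle_of_image u hu _ ?_)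
    convert h using 1
    simp only [model, Finset.image_insert, Finset.image_image, Sym2.map_mk, uv, uw, redK5]
    congr 1
  rcases determined u hu _ (insert s(v (i + 1), w) (redK5 v)) (insert s(v i, w) (greenK5 v)) rfl
    (hR _) (hG _) with h | h
  · refine moverWins_drop _ h _ rfl ⟨v i, v (i + 1), w, ?_, (hw _).symm, (hw _).symm, ?_, ?_, ?_⟩
    · exact hv.ne (by clear * -; revert i; decide)
    · exact Finset.mem_insert_of_mem (Finset.mem_insert_of_mem
        (Finset.mem_image.2 ⟨i, Finset.mem_univ _, rfl⟩))
    · simp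
    · simp
  · let p : Equiv.Perm (Fin n) := (swapPerm i).viaFintypeEmbedding ⟨v, hv⟩
    have pv : ∀ j, p (v j) = v (swapPerm i j) := fun j =>
      Equiv.Perm.viaFintypeEmbedding_apply_image (swapPerm i) ⟨v, hv⟩ j
    have pw : p w = w := by
      apply Equiv.Perm.viaFintypeEmbedding_apply_notMem_range
      rintro ⟨j, hj⟩
      exact hw j hj.symm
    have h' := nonMoverWins_relabel p h
    have e1 : swapPerm i i = i + 2 := by clear * -; revert i; decide
    have e2 : swapPerm i (i + 1) = i := by clear * -; revert i; decide
    have pR : relabel p (redK5 v) = greenK5 v := by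
      have e3 : ∀ j, swapPerm i (j + 2) = swapPerm i j + 1 := by clear * -; revert i; decide
      simp only [relabel, redK5, greenK5, Finset.image_image]
      ext x
      simp only [Finset.mem_image, Finset.mem_univ, true_and, Function.comp, Sym2.map_mk, pv, e3]
      exact (swapPerm i).surjective.exists (p := fun j => s(v j, v (j + 1)) = x) |>.symm
    have pG : relabel p (greenK5 v) = redK5 v := by
      have e3 : ∀ j, swapPerm i j = swapPerm i (j + 1) + 2 := by clear * -; revert i; decide
      simp only [relabel, redK5, greenK5, Finset.image_image]
      ext x
      simp only [Finset.mem_image, Finset.mem_univ, true_and, Function.comp, Sym2.map_mk, pv]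
      have : ∀ j, s(v (swapPerm i j), v (swapPerm i (j + 1))) =
          s(v (swapPerm i (j + 1)), v (swapPerm i (j + 1) + 2)) := by
        intro j
        rw [← e3, Sym2.eq_swap]
      simp only [this]
      constructor
      · rintro ⟨j, hj⟩
        exact ⟨_, hj⟩
      · rintro ⟨j, hj⟩
        refine ⟨(swapPerm i).symm j - 1, ?_⟩
        simpa using hj
    rw [relabel_insert, relabel_insert, Sym2.map_mk, Sym2.map_mk, pR, pG, pv, pv, pw, e1, e2] at h'
    refine MoverWins.step _ _ s(v (i + 2), w) (mem_avail.2 ⟨?_, ?_, ?_⟩) (hR _) h'.1 h'.2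
    · simpa using (hw _).symm
    · simp only [redK5, Finset.mem_image, Finset.mem_univ, true_and, Sym2.eq_iff, not_exists]
      rintro j (⟨-, h⟩ | ⟨h, -⟩)
      · exact hw _ h.symm
      · exact hw _ h.symm
    · simp only [greenK5, Finset.mem_insert, Finset.mem_image, Finset.mem_univ, true_and,
        Sym2.eq_iff, not_or, not_exists, not_and]
      refine ⟨⟨fun h => ?_, fun _ h => hw _ h⟩, fun j => ⟨fun _ h => hw _ h.symm, fun h => ?_⟩⟩
      · exact absurd (hv h) (by clear * -; revert i; decide)
      · exact absurd h.symm (hw _)
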